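/- Let K ∈ ℝ, let b ∈ (0, π/√K] (with the convention π/√K = +∞ when K ≤ 0), and let ρ : (0,b) → ℝ be continuously differentiable with ρ'(t) + ρ(t)² ≥ −K for every t ∈ (0,b) and lim_{t→0⁺} (ρ(t) − 1/t) = 0. Then ρ(t) ≥ sn_K'(t)/sn_K(t) for every t ∈ (0,b). -/

import Mathlib

open Set Filter Topology

/-- The function `sn_K`: `sin(√K t)/√K` for `K > 0`, `t` for `K = 0`,
`sinh(√(-K) t)/√(-K)` for `K < 0`. -/
noncomputable def snk (K : ℝ) (t : ℝ) : ℝ :=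
  if 0 < K then Real.sin (Real.sqrt K * t) / Real.sqrt K
  else if K = 0 then t
  else Real.sinh (Real.sqrt (-K) * t) / Real.sqrt (-K)

theorem snk_facts (K : ℝ) : ∃ c : ℝ → ℝ, (∀ t, HasDerivAt (snk K) (c t) t) ∧
    (∀ t, HasDerivAt c (-K * snk K t) t) ∧ snk K 0 = 0 ∧ c 0 = 1 ∧
    (∀ t, 0 < t → (0 < K → t < Real.pi / Real.sqrt K) → 0 < snk K t) := by
  rcases lt_trichotomy K 0 with hK | hK | hK
  · have e : snk K = fun t => Real.sinh (Real.sqrt (-K) * t) / Real.sqrt (-K) := by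
      funext t
      simp [snk, hK.ne, hK.le.not_gt]
    have hp : 0 < Real.sqrt (-K) := Real.sqrt_pos.2 (by linarith)
    have hs : Real.sqrt (-K) ^ 2 = -K := Real.sq_sqrt (by linarith)
    rw [e]
    generalize Real.sqrt (-K) = k at *
    have hl : ∀ t, HasDerivAt (fun t : ℝ => k * t) k t := fun t => by
      simpa using (hasDerivAt_id t).const_mul k
    refine ⟨fun t => Real.cosh (k * t), fun t => ?_, fun t => ?_, by simp, by simp, ?_⟩
    · refine ((hl t).sinh.div_const k).congr_deriv ?_
      beta_reduce
      field_simp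
    · convert (hl t).cosh using 1
      rw [← hs]
      beta_reduce
      field_simp
    · intro t ht _
      exact div_pos (Real.sinh_pos_iff.2 (by positivity)) hp
  · subst hK
    have e : snk 0 = fun t => t := by
      funext t
      simp [snk]
    rw [e]
    refine ⟨fun t => 1, fun t => hasDerivAt_id t, fun t => ?_, rfl, rfl, fun t ht _ => ht⟩
    simpa using hasDerivAt_const t (1:ℝ)
  · have e : snk K = fun t => Real.sin (Real.sqrt K * t) / Real.sqrt K := by
      funext t
      simp [snk, hK]
    have hp : 0 < Real.sqrt K := Real.sqrt_pos.2 hK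
    have hs : Real.sqrt K ^ 2 = K := Real.sq_sqrt hK.le
    rw [e]
    generalize Real.sqrt K = k at *
    have hl : ∀ t, HasDerivAt (fun t : ℝ => k * t) k t := fun t => by
      simpa using (hasDerivAt_id t).const_mul k
    refine ⟨fun t => Real.cos (k * t), fun t => ?_, fun t => ?_, by simp, by simp, ?_⟩
    · refine ((hl t).sin.div_const k).congr_deriv ?_
      beta_reduce
      field_simp
    · convert (hl t).cos using 1
      rw [← hs]
      beta_reduce
      field_simp
    · intro t ht h
      have := (lt_div_iff₀ hp).1 (h hK)
      exact div_pos (Real.sin_pos_of_pos_of_lt_pi (by positivity) (by linarith)) hp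

/-- **Comparison with the model logarithmic derivative, upper curvature bound.**
Let `K ∈ ℝ` and `b ∈ (0, π/√K]` (with the convention `π/√K = +∞` for `K ≤ 0`).
If `ρ : (0,b) → ℝ` is `C¹`, satisfies `ρ' + ρ² ≥ -K` on `(0,b)` and
`ρ(t) - 1/t → 0` as `t → 0⁺`, then `ρ(t) ≥ sn_K'(t)/sn_K(t)` on `(0,b)`. -/
theorem riccati_lower_comparison_snk
    (K b : ℝ) (hb : 0 < b) (hbK : 0 < K → b ≤ Real.pi / Real.sqrt K)
    (ρ ρ' : ℝ → ℝ)
    (hd : ∀ t ∈ Ioo (0:ℝ) b, HasDerivAt ρ (ρ' t) t)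
    (hc : ContinuousOn ρ' (Ioo (0:ℝ) b))
    (hineq : ∀ t ∈ Ioo (0:ℝ) b, -K ≤ ρ' t + (ρ t) ^ 2)
    (hlim : Tendsto (fun t => ρ t - 1 / t) (𝓝[>] (0:ℝ)) (𝓝 0)) :
    ∀ t ∈ Ioo (0:ℝ) b, deriv (snk K) t / snk K t ≤ ρ t := by
  obtain ⟨c, hs, hcd, hs0, hc0, hpos⟩ := snk_facts K
  have hspos : ∀ t ∈ Ioo (0:ℝ) b, 0 < snk K t := fun t ht =>
    hpos t ht.1 fun hK => ht.2.trans_le (hbK hK)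
  -- positivity of ρ near 0
  obtain ⟨δ, hδ, hδρ⟩ : ∃ δ > 0, ∀ t ∈ Ioo (0:ℝ) δ, -1 < ρ t - 1 / t := by
    have := hlim.eventually (lt_mem_nhds (show (-1:ℝ) < 0 by norm_num))
    obtain ⟨δ, hδ, h⟩ := mem_nhdsGT_iff_exists_Ioo_subset.1 this
    exact ⟨δ, hδ, fun t ht => h ht⟩
  obtain ⟨a, ha0, ham⟩ := exists_between (show 0 < min δ (min 1 b) by positivity)
  simp only [lt_min_iff] at ham
  obtain ⟨haδ, ha1, hab⟩ := ham
  have hρpos : ∀ t ∈ Ioc (0:ℝ) a, 0 ≤ ρ t := by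
    intro t ht
    have h1 := hδρ t ⟨ht.1, ht.2.trans_lt haδ⟩
    have h2 : 1 ≤ 1 / t := (one_le_div₀ ht.1).2 (ht.2.trans ha1.le)
    linarith
  have hρc : ContinuousOn ρ (Ioo 0 b) := fun t ht => (hd t ht).continuousAt.continuousWithinAt
  have hF : ∀ t ∈ Ioo (0:ℝ) b, HasDerivAt (fun t => ∫ x in a..t, ρ x) (ρ t) t := by
    intro t ht
    apply intervalIntegral.integral_hasDerivAt_right
    · apply ContinuousOn.intervalIntegrable
      exact hρc.mono (ordConnected_Ioo.uIcc_subset ⟨ha0, hab⟩ ht)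
    · exact hρc.stronglyMeasurableAtFilter isOpen_Ioo t ht
    · exact (hd t ht).continuousAt
  set f : ℝ → ℝ := fun t => Real.exp (∫ x in a..t, ρ x) with hf
  have hfd : ∀ t ∈ Ioo (0:ℝ) b, HasDerivAt f (f t * ρ t) t := fun t ht => (hF t ht).exp
  have hfpos : ∀ t, 0 < f t := fun t => Real.exp_pos _
  have hf1 : ∀ t ∈ Ioc (0:ℝ) a, f t ≤ 1 := by
    intro t ht
    apply Real.exp_le_one_iff.2
    rw [intervalIntegral.integral_symm]
    have := intervalIntegral.integral_nonneg (μ := MeasureTheory.volume) ht.2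
      (fun x hx => hρpos x ⟨ht.1.trans_le hx.1, hx.2⟩)
    linarith
  set W : ℝ → ℝ := fun t => f t * (ρ t * snk K t - c t) with hW
  have hWd : ∀ t ∈ Ioo (0:ℝ) b,
      HasDerivAt W (f t * snk K t * (ρ' t + ρ t ^ 2 + K)) t := by
    intro t ht
    refine ((hfd t ht).mul (((hd t ht).mul (hs t)).sub (hcd t))).congr_deriv ?_
    simp only [Pi.mul_apply, Pi.sub_apply]
    ring
  have hmono : MonotoneOn W (Ioo 0 b) := by
    apply monotoneOn_of_deriv_nonneg (convex_Ioo 0 b)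
    · exact fun t ht => (hWd t ht).continuousAt.continuousWithinAt
    · rw [interior_Ioo]
      exact fun t ht => (hWd t ht).differentiableAt.differentiableWithinAt
    · rw [interior_Ioo]
      intro t ht
      rw [(hWd t ht).deriv]
      have := hineq t ht
      exact mul_nonneg (mul_pos (hfpos t) (hspos t ht)).le (by linarith)
  have hg : Tendsto (fun t => ρ t * snk K t - c t) (𝓝[>] (0:ℝ)) (𝓝 0) := by
    have h1 : Tendsto (snk K) (𝓝[>] (0:ℝ)) (𝓝 0) := by
      have := (hs 0).continuousAt.tendsto
      rw [hs0] at this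
      exact this.mono_left nhdsWithin_le_nhds
    have h2 : Tendsto c (𝓝[>] (0:ℝ)) (𝓝 1) := by
      have := (hcd 0).continuousAt.tendsto
      rw [hc0] at this
      exact this.mono_left nhdsWithin_le_nhds
    have h3 : Tendsto (fun t => t⁻¹ * snk K t) (𝓝[>] (0:ℝ)) (𝓝 1) := by
      have := (hs 0).tendsto_slope_zero_right
      simpa [hs0, hc0] using this
    have h4 := ((hlim.mul h1).add h3).sub h2
    simp only [mul_zero, zero_add, sub_self] at h4
    refine h4.congr fun t => ?_
    ring
  have hW0 : Tendsto W (𝓝[>] (0:ℝ)) (𝓝 0) := by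
    apply squeeze_zero_norm' _ (by simpa using hg.norm)
    filter_upwards [Ioc_mem_nhdsGT ha0] with t ht
    rw [hW, norm_mul, Real.norm_of_nonneg (hfpos t).le]
    exact mul_le_of_le_one_left (norm_nonneg _) (hf1 t ht)
  intro t ht
  have hWt : 0 ≤ W t := by
    apply le_of_tendsto hW0
    filter_upwards [Ioc_mem_nhdsGT ht.1] with x hx
    exact hmono ⟨hx.1, hx.2.trans_lt ht.2⟩ ht hx.2
  have := nonneg_of_mul_nonneg_right hWt (hfpos t)
  rw [(hs t).deriv, div_le_iff₀ (hspos t ht)]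
  linarith
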